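/- The map ℤ × ℤ → B_3 given by (k, l) ↦ σ_1^k · ((σ_2 σ_1)³)^l is an injective group homomorphism whose image is the subgroup H_3; in particular, every element of H_3 is uniquely of the form σ_1^k (σ_2 σ_1)^{3l} with k, l ∈ ℤ, and H_3 is free abelian of rank 2. -/

import Mathlib

/-!
The element `c = (σ₂ σ₁)³` is central by the braid relation, so `(k, l) ↦ σ₁ᵏ cˡ` is a homomorphism
and its image is the subgroup generated by `σ₁` and `c`. For injectivity, two representations
of `B3` detect the kernel. The map to `SL(2, ℤ)` sends `σ₁` to the transvection `T` and `c` to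
`-1`, so `σ₁ᵏ cˡ = 1` gives `Tᵏ = ±1` and hence `k = 0`. The exponent-sum map `B3 → ℤ` sends
`σ₁ᵏ cˡ` to `k + 6 l`, and therefore `l = 0` as well.
-/

/-- The defining relator of the braid group on 3 strands. -/
def braidRels3 : Set (FreeGroup (Fin 2)) :=
  {FreeGroup.of 0 * FreeGroup.of 1 * FreeGroup.of 0 *
    (FreeGroup.of 1 * FreeGroup.of 0 * FreeGroup.of 1)⁻¹}

/-- The braid group on 3 strands. -/
abbrev B3 : Type := PresentedGroup braidRels3

/-- The generator `σ₁` of `B3`. -/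
abbrev B3.sig1 : B3 := PresentedGroup.of 0
/-- The generator `σ₂` of `B3`. -/
abbrev B3.sig2 : B3 := PresentedGroup.of 1

theorem B3.braid : B3.sig1 * B3.sig2 * B3.sig1 = B3.sig2 * B3.sig1 * B3.sig2 := by
  have h : PresentedGroup.mk braidRels3 (FreeGroup.of 0 * FreeGroup.of 1 * FreeGroup.of 0 *
      (FreeGroup.of 1 * FreeGroup.of 0 * FreeGroup.of 1)⁻¹) = 1 :=
    PresentedGroup.one_of_mem rfl
  rw [map_mul, map_inv, mul_inv_eq_one] at h
  simp only [map_mul] at h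
  exact h

theorem B3.commute_sig1_center : Commute B3.sig1 ((B3.sig2 * B3.sig1) ^ 3) := by
  have h := B3.braid
  generalize B3.sig1 = a at *
  generalize B3.sig2 = b at *
  -- With `x = σ₂ σ₁` and `Δ = σ₁ σ₂ σ₁`, the relation says `x³ = Δ²`, and `Δ` swaps `σ₁` and `σ₂`.
  have hc : (b * a) ^ 3 = (a * b * a) * (a * b * a) := by
    rw [show (b * a) ^ 3 = (b * a * b) * (a * b * a) by
      simp only [pow_succ, pow_zero, one_mul, mul_assoc], ← h]
  have h1 : a * (a * b * a) = (a * b * a) * b := by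
    conv_lhs => rw [h]
    simp only [mul_assoc]
  have h2 : b * (a * b * a) = (a * b * a) * a := by
    conv_rhs => rw [h]
    simp only [mul_assoc]
  rw [hc]
  show a * (_ * _) = (_ * _) * a
  rw [← mul_assoc, h1, mul_assoc, h2, ← mul_assoc]

/-- The homomorphism out of `B3` determined by two elements satisfying the braid relation. -/
def B3.lift {G : Type*} [Group G] (x y : G) (h : x * y * x = y * x * y) : B3 →* G :=
  PresentedGroup.toGroup (f := ![x, y]) (by
    rintro r rfl
    simp [h])

@[simp] theorem B3.lift_sig1 {G : Type*} [Group G] (x y : G) (h : x * y * x = y * x * y) :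
    B3.lift x y h B3.sig1 = x := by simp [B3.lift]

@[simp] theorem B3.lift_sig2 {G : Type*} [Group G] (x y : G) (h : x * y * x = y * x * y) :
    B3.lift x y h B3.sig2 = y := by simp [B3.lift]

/-- The image of `σ₂` under the standard representation of `B3` in `SL(2, ℤ)`. -/
def B3.lowerT : Matrix.SpecialLinearGroup (Fin 2) ℤ :=
  ⟨!![1, 0; -1, 1], by simp⟩

theorem B3.T_braid : ModularGroup.T * B3.lowerT * ModularGroup.T =
    B3.lowerT * ModularGroup.T * B3.lowerT := by
  decide +kernel

theorem B3.lowerT_mul_T_pow : (B3.lowerT * ModularGroup.T) ^ 3 = -1 := by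
  decide +kernel

theorem B3.eq_zero_of_eq_one (k l : ℤ)
    (h : B3.sig1 ^ k * ((B3.sig2 * B3.sig1) ^ 3) ^ l = 1) : k = 0 ∧ l = 0 := by
  have hk : k = 0 := by
    have h1 := congrArg (B3.lift _ _ B3.T_braid) h
    simp only [map_mul, map_zpow, map_pow, B3.lift_sig1, B3.lift_sig2, map_one,
      B3.lowerT_mul_T_pow] at h1
    have h2 : ModularGroup.T ^ k = 1 ∨ ModularGroup.T ^ k = -1 := by
      rcases Int.even_or_odd l with hl | hl
      · left; simpa [hl.neg_one_zpow] using h1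
      · right
        obtain ⟨m, rfl⟩ := hl
        rw [zpow_add, zpow_mul, zpow_one] at h1
        have : (-1 : Matrix.SpecialLinearGroup (Fin 2) ℤ) ^ (2 : ℤ) = 1 := by
          decide +kernel
        rw [this, one_zpow, one_mul, mul_neg, mul_one, neg_eq_iff_eq_neg] at h1
        exact h1
    have h3 := ModularGroup.coe_T_zpow k
    rcases h2 with h2 | h2 <;> rw [h2] at h3 <;>
      simpa [eq_comm] using congrFun (congrFun h3 0) 1
  have hs := congrArg (B3.lift (Multiplicative.ofAdd (1 : ℤ)) (Multiplicative.ofAdd 1) rfl) h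
  simp only [map_mul, map_zpow, map_pow, B3.lift_sig1, B3.lift_sig2, map_one] at hs
  have hs' := congrArg Multiplicative.toAdd hs
  simp at hs'
  omega

/-- the map `(k, l) ↦ σ₁ᵏ ((σ₂ σ₁)³)ˡ` is an injective group
homomorphism `ℤ × ℤ → B3` whose image is the subgroup
`H₃ = ⟨σ₁, (σ₂ σ₁)³⟩`; in particular `H₃` is free abelian of rank 2. -/
theorem H3_free_abelian :
    (∀ p q : ℤ × ℤ,
      B3.sig1 ^ (p.1 + q.1) * ((B3.sig2 * B3.sig1) ^ 3) ^ (p.2 + q.2) =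
        (B3.sig1 ^ p.1 * ((B3.sig2 * B3.sig1) ^ 3) ^ p.2) *
          (B3.sig1 ^ q.1 * ((B3.sig2 * B3.sig1) ^ 3) ^ q.2)) ∧
    Function.Injective
      (fun p : ℤ × ℤ => B3.sig1 ^ p.1 * ((B3.sig2 * B3.sig1) ^ 3) ^ p.2) ∧
    Set.range (fun p : ℤ × ℤ => B3.sig1 ^ p.1 * ((B3.sig2 * B3.sig1) ^ 3) ^ p.2) =
      (Subgroup.closure {B3.sig1, (B3.sig2 * B3.sig1) ^ 3} : Subgroup B3) := by
  have hom : ∀ p q : ℤ × ℤ,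
      B3.sig1 ^ (p.1 + q.1) * ((B3.sig2 * B3.sig1) ^ 3) ^ (p.2 + q.2) =
        (B3.sig1 ^ p.1 * ((B3.sig2 * B3.sig1) ^ 3) ^ p.2) *
          (B3.sig1 ^ q.1 * ((B3.sig2 * B3.sig1) ^ 3) ^ q.2) := fun p q => by
    rw [zpow_add, zpow_add]
    exact (B3.commute_sig1_center.zpow_zpow q.1 p.2).mul_mul_mul_comm _ _
  refine ⟨hom, fun p q hpq => ?_, ?_⟩
  · have h := hom (p - q) q
    simp only [Prod.fst_sub, Prod.snd_sub, sub_add_cancel] at h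
    obtain ⟨h1, h2⟩ := B3.eq_zero_of_eq_one _ _ (right_eq_mul.mp (hpq.symm.trans h))
    exact Prod.ext (sub_eq_zero.mp h1) (sub_eq_zero.mp h2)
  · apply Set.Subset.antisymm
    · rintro _ ⟨p, rfl⟩
      exact mul_mem (zpow_mem (Subgroup.subset_closure (by simp)) _)
        (zpow_mem (Subgroup.subset_closure (by simp)) _)
    · let f : Multiplicative (ℤ × ℤ) →* B3 := MonoidHom.mk' (fun p =>
        B3.sig1 ^ p.toAdd.1 * ((B3.sig2 * B3.sig1) ^ 3) ^ p.toAdd.2)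
        (fun p q => hom p.toAdd q.toAdd)
      have hle : Subgroup.closure {B3.sig1, (B3.sig2 * B3.sig1) ^ 3} ≤ f.range := by
        rw [Subgroup.closure_le]
        rintro _ (rfl | rfl)
        · exact ⟨Multiplicative.ofAdd (1, 0), by simp [f]⟩
        · exact ⟨Multiplicative.ofAdd (0, 1), by simp [f]⟩
      intro x hx
      obtain ⟨p, hp⟩ := hle hx
      exact ⟨p.toAdd, hp⟩
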